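/- Let α ∈ ℝ and μ ∈ ℝ. Let u : ℝ² → ℝ be a smooth function of (t,x) with u(t,x) ≠ 0 at every point, set m = u − u_xx, and suppose that at every point m_t + ( α u_x/u³ ) m + ∂_x( ( α/u² ) m ) = 0. Then both of the following local conservation laws hold at every point: (i) ∂_t( u² + u_x² ) + ∂_x( 2α m/u − 2 u u_tx ) = 0 (H¹ density), and (ii) ∂_t( u_xx² + μ u_x² + (μ−1) u² ) + ∂_x[ 2(1−μ) u u_tx − 2 u_x u_t + α( m² + 2(μ−2) u m − (μ−2) u² )/u² ] = 0 (weighted H² / gradient-energy density); in particular, for μ = 2 the density u_xx² + 2u_x² + u² is locally equivalent to m², whose flux is α m²/u². -/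

import Mathlib

open Real

noncomputable section

/-- Partial derivative in the first (time) variable. -/
def pt (f : ℝ → ℝ → ℝ) (t x : ℝ) : ℝ := deriv (fun s => f s x) t

/-- Partial derivative in the second (space) variable. -/
def px (f : ℝ → ℝ → ℝ) (t x : ℝ) : ℝ := deriv (fun y => f t y) x

/-- The momentum variable `m = u - u_xx`. -/
def mf (u : ℝ → ℝ → ℝ) (t x : ℝ) : ℝ := u t x - px (px u) t x

theorem aux_pt (f : ℝ → ℝ → ℝ) (hf : ContDiff ℝ (⊤ : ℕ∞) (Function.uncurry f)) (t x : ℝ) :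
    HasDerivAt (fun s => f s x) (fderiv ℝ (Function.uncurry f) (t, x) (1, 0)) t := by
  have h := (hf.differentiable (by simp) (t, x)).hasFDerivAt
  exact h.comp_hasDerivAt t ((hasDerivAt_id t).prodMk (hasDerivAt_const t x))

theorem aux_px (f : ℝ → ℝ → ℝ) (hf : ContDiff ℝ (⊤ : ℕ∞) (Function.uncurry f)) (t x : ℝ) :
    HasDerivAt (fun s => f t s) (fderiv ℝ (Function.uncurry f) (t, x) (0, 1)) x := by
  have h := (hf.differentiable (by simp) (t, x)).hasFDerivAt
  exact h.comp_hasDerivAt x ((hasDerivAt_const x t).prodMk (hasDerivAt_id x))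

theorem has_pt {f : ℝ → ℝ → ℝ} (hf : ContDiff ℝ (⊤ : ℕ∞) (Function.uncurry f)) (t x : ℝ) :
    HasDerivAt (fun s => f s x) (pt f t x) t :=
  (aux_pt f hf t x).differentiableAt.hasDerivAt

theorem has_px {f : ℝ → ℝ → ℝ} (hf : ContDiff ℝ (⊤ : ℕ∞) (Function.uncurry f)) (t x : ℝ) :
    HasDerivAt (fun y => f t y) (px f t x) x :=
  (aux_px f hf t x).differentiableAt.hasDerivAt

theorem unc_pt {f : ℝ → ℝ → ℝ} (hf : ContDiff ℝ (⊤ : ℕ∞) (Function.uncurry f)) :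
    Function.uncurry (pt f) = fun p => fderiv ℝ (Function.uncurry f) p (1, 0) := by
  funext ⟨t, x⟩
  exact (aux_pt f hf t x).deriv

theorem unc_px {f : ℝ → ℝ → ℝ} (hf : ContDiff ℝ (⊤ : ℕ∞) (Function.uncurry f)) :
    Function.uncurry (px f) = fun p => fderiv ℝ (Function.uncurry f) p (0, 1) := by
  funext ⟨t, x⟩
  exact (aux_px f hf t x).deriv

theorem smooth_fd {f : ℝ → ℝ → ℝ} (hf : ContDiff ℝ (⊤ : ℕ∞) (Function.uncurry f)) :
    ContDiff ℝ (⊤ : ℕ∞) (fderiv ℝ (Function.uncurry f)) :=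
  hf.fderiv_right (by exact_mod_cast le_top)

theorem smooth_pt {f : ℝ → ℝ → ℝ} (hf : ContDiff ℝ (⊤ : ℕ∞) (Function.uncurry f)) :
    ContDiff ℝ (⊤ : ℕ∞) (Function.uncurry (pt f)) := by
  rw [unc_pt hf]; exact (smooth_fd hf).clm_apply contDiff_const

theorem smooth_px {f : ℝ → ℝ → ℝ} (hf : ContDiff ℝ (⊤ : ℕ∞) (Function.uncurry f)) :
    ContDiff ℝ (⊤ : ℕ∞) (Function.uncurry (px f)) := by
  rw [unc_px hf]; exact (smooth_fd hf).clm_apply contDiff_const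

theorem px_pt_comm {f : ℝ → ℝ → ℝ} (hf : ContDiff ℝ (⊤ : ℕ∞) (Function.uncurry f)) (t x : ℝ) :
    px (pt f) t x = pt (px f) t x := by
  have hd := ((smooth_fd hf).differentiable (by simp) (t, x)).hasFDerivAt
  have h1 : px (pt f) t x = fderiv ℝ (fderiv ℝ (Function.uncurry f)) (t, x) (0, 1) (1, 0) := by
    refine (aux_px _ (smooth_pt hf) t x).deriv.trans ?_
    rw [unc_pt hf, (hd.clm_apply (hasFDerivAt_const _ _)).fderiv]
    simp
  have h2 : pt (px f) t x = fderiv ℝ (fderiv ℝ (Function.uncurry f)) (t, x) (1, 0) (0, 1) := by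
    refine (aux_pt _ (smooth_px hf) t x).deriv.trans ?_
    rw [unc_px hf, (hd.clm_apply (hasFDerivAt_const _ _)).fderiv]
    simp
  rw [h1, h2]
  have hs : IsSymmSndFDerivAt ℝ (Function.uncurry f) (t, x) :=
    hf.contDiffAt.isSymmSndFDerivAt (by simp; exact WithTop.coe_le_coe.2 (le_top : (2 : ℕ∞) ≤ ⊤))
  exact hs.eq _ _

/-- H¹ and weighted H² (gradient-energy) conservation laws for the family
`m_t + (α u_x/u³) m + ∂_x((α/u²) m) = 0`; in particular for `μ = 2` the density is
locally equivalent to `m²` with flux `α m²/u²`. -/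
theorem H1_and_weighted_H2_conservation
    (α μ : ℝ)
    (u : ℝ → ℝ → ℝ) (hu : ContDiff ℝ (⊤ : ℕ∞) (Function.uncurry u))
    (hne : ∀ t x : ℝ, u t x ≠ 0)
    (heq : ∀ t x : ℝ,
      pt (mf u) t x
        + (α * px u t x / (u t x)^3) * mf u t x
        + px (fun t' x' => (α / (u t' x')^2) * mf u t' x') t x = 0) :
    (∀ t x : ℝ,
      pt (fun t' x' => (u t' x')^2 + (px u t' x')^2) t x
        + px (fun t' x' =>
            2 * α * mf u t' x' / u t' x' - 2 * u t' x' * pt (px u) t' x') t x = 0)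
    ∧
    (∀ t x : ℝ,
      pt (fun t' x' =>
          (px (px u) t' x')^2 + μ * (px u t' x')^2 + (μ - 1) * (u t' x')^2) t x
        + px (fun t' x' =>
            2 * (1 - μ) * u t' x' * pt (px u) t' x'
              - 2 * px u t' x' * pt u t' x'
              + α * ((mf u t' x')^2 + 2 * (μ - 2) * u t' x' * mf u t' x'
                  - (μ - 2) * (u t' x')^2) / (u t' x')^2) t x = 0)
    ∧
    (∀ t x : ℝ,
      pt (fun t' x' => (mf u t' x')^2) t x
        + px (fun t' x' => α * (mf u t' x')^2 / (u t' x')^2) t x = 0) := by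
  have h1 := smooth_px hu
  have h2 := smooth_px h1
  have hm : ContDiff ℝ (⊤ : ℕ∞) (Function.uncurry (mf u)) := hu.sub h2
  have mt : ∀ t x, pt (mf u) t x = pt u t x - pt (px (px u)) t x := fun t x =>
    ((has_pt hu t x).sub (has_pt h2 t x)).deriv
  have E : ∀ t x, pt (mf u) t x
      = α * mf u t x * px u t x / u t x ^ 3 - α * px (mf u) t x / u t x ^ 2 := by
    intro t x
    have hn := hne t x
    have e := heq t x
    have d : px (fun t' x' => (α / (u t' x')^2) * mf u t' x') t x = _ :=
      ((((hasDerivAt_const x α).div ((has_px hu t x).pow 2)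
        (pow_ne_zero 2 hn))).mul (has_px hm t x)).deriv
    rw [d] at e
    rw [eq_neg_of_add_eq_zero_left ((add_assoc _ _ _).symm.trans e)]
    simp only [Pi.pow_apply, Pi.div_apply]
    field_simp
    push_cast
    ring
  refine ⟨fun t x => ?_, fun t x => ?_, fun t x => ?_⟩
  · have hn := hne t x
    have a : pt (fun t' x' => (u t' x')^2 + (px u t' x')^2) t x = _ :=
      (((has_pt hu t x).pow 2).add ((has_pt h1 t x).pow 2)).deriv
    have b : px (fun t' x' =>
            2 * α * mf u t' x' / u t' x' - 2 * u t' x' * pt (px u) t' x') t x = _ :=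
      ((((has_px hm t x).const_mul (2 * α)).div (has_px hu t x) hn).sub
        (((has_px hu t x).const_mul 2).mul (has_px (smooth_pt h1) t x))).deriv
    rw [a, b, px_pt_comm h1]
    have e := E t x
    have m1 := mt t x
    have e2 : pt (px (px u)) t x = pt u t x - pt (mf u) t x := by linarith
    rw [e2, e]
    field_simp
    push_cast
    ring
  · have hn := hne t x
    have a : pt (fun t' x' =>
          (px (px u) t' x')^2 + μ * (px u t' x')^2 + (μ - 1) * (u t' x')^2) t x = _ :=
      ((((has_pt h2 t x).pow 2).add (((has_pt h1 t x).pow 2).const_mul μ)).add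
        (((has_pt hu t x).pow 2).const_mul (μ - 1))).deriv
    have b : px (fun t' x' =>
            2 * (1 - μ) * u t' x' * pt (px u) t' x'
              - 2 * px u t' x' * pt u t' x'
              + α * ((mf u t' x')^2 + 2 * (μ - 2) * u t' x' * mf u t' x'
                  - (μ - 2) * (u t' x')^2) / (u t' x')^2) t x = _ :=
      (((((has_px hu t x).const_mul (2 * (1 - μ))).mul (has_px (smooth_pt h1) t x)).sub
        (((has_px h1 t x).const_mul 2).mul (has_px (smooth_pt hu) t x))).add
        ((((((has_px hm t x).pow 2).add
          (((has_px hu t x).const_mul (2 * (μ - 2))).mul (has_px hm t x))).sub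
          (((has_px hu t x).pow 2).const_mul (μ - 2))).const_mul α).div
          ((has_px hu t x).pow 2) (pow_ne_zero 2 hn))).deriv
    rw [a, b, px_pt_comm h1, px_pt_comm hu]
    have e := E t x
    have m1 := mt t x
    have e2 : pt (px (px u)) t x = pt u t x - pt (mf u) t x := by linarith
    have e3 : px (px u) t x = u t x - mf u t x := by simp [mf]
    rw [e2, e, e3]
    simp only [Pi.pow_apply, Pi.add_apply, Pi.sub_apply, Pi.mul_apply]
    field_simp
    push_cast
    ring
  · have hn := hne t x
    have a : pt (fun t' x' => (mf u t' x')^2) t x = _ := ((has_pt hm t x).pow 2).deriv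
    have b : px (fun t' x' => α * (mf u t' x')^2 / (u t' x')^2) t x = _ :=
      ((((has_px hm t x).pow 2).const_mul α).div
          ((has_px hu t x).pow 2) (pow_ne_zero 2 hn)).deriv
    rw [a, b, E t x]
    simp only [Pi.pow_apply]
    field_simp
    push_cast
    ring

end
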